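/- Let Δ be a Fano simplex of dimension d = 4 and Gorenstein index g = 1. Then mult(Δ) ≤ 128, and equality holds if and only if Δ ≅ Δ(P) where P is the 4×5 integer matrix with columns (1,0,0,0), (1,2,0,0), (1,2,8,0), (1,2,0,8), (−7,−6,−8,−8). -/

import Mathlib

open Finset Pointwise

/-- Cast an integer vector to a rational vector. -/
def toQ {d : ℕ} (v : Fin d → ℤ) : Fin d → ℚ := fun j => (v j : ℚ)

/-- An integer vector is primitive if the gcd of its entries is 1. -/
def IsPrimitive {d : ℕ} (v : Fin d → ℤ) : Prop := Finset.univ.gcd v = 1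

/-- The origin lies in the interior of the simplex with the given vertices,
i.e. the origin is a convex combination of the vertices with positive coefficients. -/
def OriginInInterior {d : ℕ} (v : Fin (d + 1) → Fin d → ℚ) : Prop :=
  ∃ w : Fin (d + 1) → ℚ, (∀ i, 0 < w i) ∧ ∑ i, w i = 1 ∧ ∀ j, ∑ i, w i * v i j = 0

/-- A Fano simplex, given by its tuple of vertices: the vertices are primitive integer
vectors, affinely independent, and the origin lies in the interior. -/
def IsFanoSimplex {d : ℕ} (v : Fin (d + 1) → Fin d → ℤ) : Prop :=
  AffineIndependent ℚ (fun i => toQ (v i)) ∧ (∀ i, IsPrimitive (v i)) ∧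
    OriginInInterior fun i => toQ (v i)

/-- The simplex spanned by the given vertices. -/
def simplexHull {d : ℕ} (v : Fin (d + 1) → Fin d → ℚ) : Set (Fin d → ℚ) :=
  convexHull ℚ (Set.range v)

/-- The dual body `Δ* = {u : ⟨u,v⟩ ≥ -1 for all v ∈ Δ}`. -/
def dualBody {d : ℕ} (S : Set (Fin d → ℚ)) : Set (Fin d → ℚ) :=
  {u | ∀ x ∈ S, -1 ≤ ∑ j, u j * x j}

/-- A set is a lattice polytope iff it is the convex hull of its integral points
(equivalently, all its vertices are lattice points). -/
def IsLatticeSet {d : ℕ} (S : Set (Fin d → ℚ)) : Prop :=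
  S = convexHull ℚ {x ∈ S | ∀ j, ∃ z : ℤ, x j = (z : ℚ)}

/-- The Gorenstein index: the least positive integer `g` such that `g • Δ*` is a
lattice polytope. -/
noncomputable def gorensteinIndex {d : ℕ} (v : Fin (d + 1) → Fin d → ℚ) : ℕ :=
  sInf {g : ℕ | 0 < g ∧ IsLatticeSet ((g : ℚ) • dualBody (simplexHull v))}

/-- The normalized volume `d! · vol(Δ)` of the simplex with the given vertices. -/
def normVol {d : ℕ} (v : Fin (d + 1) → Fin d → ℚ) : ℚ :=
  |(Matrix.of fun i j : Fin d => v i.succ j - v 0 j).det|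

/-- Two (Fano) simplices, given by their vertex tuples, are isomorphic iff some
unimodular integer matrix maps the vertex set of one onto the vertex set of the other. -/
def IsIsomorphicTo {d : ℕ} (v w : Fin (d + 1) → Fin d → ℤ) : Prop :=
  ∃ (U : Matrix (Fin d) (Fin d) ℤ) (σ : Equiv.Perm (Fin (d + 1))),
    IsUnit U.det ∧ ∀ i, U.mulVec (v i) = w (σ i)


/-- The multiplicity of a Fano simplex: the index in `ℤ^d` of the sublattice
generated by the vertices. -/
noncomputable def multOf {d : ℕ} (v : Fin (d + 1) → Fin d → ℤ) : ℕ :=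
  (AddSubgroup.closure (Set.range v)).index

/-!
If the dual `Δ*` is a lattice polytope, its vertices `u i` are integral and pair with the vertices
of `Δ` as `⟨u i, v j⟩ = a i * δ i j - 1`, where `1 / a i` are the barycentric coordinates of the
origin; so the `a i` are positive integers with `∑ 1 / a i = 1`. Deleting the last vertex, the
determinant of the pairing matrix gives `det u * det v * a d = a 0 * ⋯ * a (d - 1)`, and `mult Δ`
divides `det v`. For `d = 4` and `a` sorted, it remains to see that
`a 0 * a 1 * a 2 * a 3 / a 4 ≤ 128` with equality only for `a = (2, 8, 8, 8, 8)`. In the case of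
equality `det u = ±1`, so that the `u i` are a unimodular change of coordinates which brings `Δ`
into a form depending on `a` only.
-/

section LinearAlgebra

theorem index_closure_range_eq_natAbs_det {ι : Type*} [Fintype ι] [DecidableEq ι]
    {w : Matrix ι ι ℤ} (hw : w.det ≠ 0) :
    (AddSubgroup.closure (Set.range w)).index = w.det.natAbs := by
  have hli : LinearIndependent ℤ w := Matrix.linearIndependent_rows_of_det_ne_zero hw
  have hcoe : (fun i => (Module.Basis.span hli i : ι → ℤ)) = w :=
    funext fun i => congrArg Subtype.val (Module.Basis.span_apply hli i)
  rw [← Submodule.span_int_eq_addSubgroupClosure,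
    AddSubgroup.index_eq_natAbs_det (Pi.basisFun ℤ ι) _ (Module.Basis.span hli),
    Pi.basisFun_det, hcoe]
  rfl

theorem mulVec_bijective_of_isUnit {ι R : Type*} [Fintype ι] [DecidableEq ι] [CommRing R]
    {A : Matrix ι ι R} (hA : IsUnit A) : Function.Bijective A.mulVec :=
  ⟨Matrix.mulVec_injective_of_isUnit hA, Matrix.mulVec_surjective_iff_isUnit.2 hA⟩

variable {K E : Type*} [Field K] [AddCommGroup E] [Module K E]

theorem linearIndependent_comp_succAbove_of_affineIndependent {n : ℕ} {p : Fin (n + 1) → E}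
    (hp : AffineIndependent K p) {w : Fin (n + 1) → K} (hw : ∑ i, w i = 1)
    (hwp : ∑ i, w i • p i = 0) {i : Fin (n + 1)} (hi : w i ≠ 0) :
    LinearIndependent K (p ∘ i.succAbove) := by
  rw [Fintype.linearIndependent_iff]
  intro c hc
  set e : Fin (n + 1) → K := i.insertNth 0 c with he
  have hei : e i = 0 := by simp [he]
  have hek : ∀ k, e (i.succAbove k) = c k := by simp [he]
  have hep : ∑ j, e j • p j = 0 := by
    rw [Fin.sum_univ_succAbove _ i]
    simpa only [hei, hek, zero_smul, zero_add] using! hc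
  -- Subtracting a multiple of `w` makes the coefficients of a linear relation sum to zero.
  have hzero : ∀ j, e j - (∑ l, e l) * w j = 0 := fun j =>
    hp.eq_zero_of_sum_eq_zero (s := univ) (w := fun j => e j - (∑ l, e l) * w j)
      (by rw [sum_sub_distrib, ← mul_sum, hw, mul_one, sub_self])
      (by simp only [sub_smul, mul_smul, sum_sub_distrib, ← smul_sum, hep, hwp, smul_zero,
        sub_self]) j (mem_univ j)
  have hsum : ∑ l, e l = 0 := by simpa [hei, hi] using hzero i
  intro k
  simpa [hsum, hek] using hzero (i.succAbove k)

theorem det_diagonal_sub_all_ones {n : Type*} [Fintype n] [DecidableEq n] {a : n → K}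
    (ha : ∀ i, a i ≠ 0) :
    (Matrix.diagonal a - Matrix.of fun _ _ => 1).det = (∏ i, a i) * (1 - ∑ i, (a i)⁻¹) := by
  have hfactor : Matrix.diagonal a - Matrix.of (fun _ _ => 1) = Matrix.diagonal a *
      (1 + Matrix.replicateCol Unit (-a⁻¹) * Matrix.replicateRow Unit (1 : n → K)) := by
    rw [Matrix.mul_add, Matrix.mul_one]
    ext i j
    simp [ha, sub_eq_add_neg, Matrix.diagonal_apply, Matrix.mul_apply]
  rw [hfactor, Matrix.det_mul, Matrix.det_diagonal,
    Matrix.det_one_add_replicateCol_mul_replicateRow]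
  simp [dotProduct, sub_eq_add_neg]

end LinearAlgebra

section DualVertices

variable {K : Type*} [Field K] {d : ℕ} {p : Fin (d + 1) → Fin d → K} {w : Fin (d + 1) → K}
  {i : Fin (d + 1)}

theorem existsUnique_dotProduct_eq_neg_one (hp : AffineIndependent K p) (hw : ∑ i, w i = 1)
    (hwp : ∑ i, w i • p i = 0) (hi : w i ≠ 0) :
    ∃! u : Fin d → K, ∀ j ≠ i, u ⬝ᵥ p j = -1 := by
  let M : Matrix (Fin d) (Fin d) K := Matrix.of (p ∘ i.succAbove)
  have hM : IsUnit M := Matrix.linearIndependent_rows_iff_isUnit.1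
    (linearIndependent_comp_succAbove_of_affineIndependent hp hw hwp hi)
  have hsolve : ∀ u : Fin d → K, (∀ j ≠ i, u ⬝ᵥ p j = -1) ↔ M.mulVec u = -1 := fun u => by
    rw [funext_iff, Fin.forall_iff_succAbove i]
    simp [M, Matrix.mulVec, dotProduct_comm, Fin.succAbove_ne]
  simp only [hsolve]
  exact (mulVec_bijective_of_isUnit hM).existsUnique (-1)

theorem weight_mul_dotProduct_add_one_eq_one {u : Fin d → K} (hw : ∑ i, w i = 1)
    (hwp : ∑ i, w i • p i = 0) (hu : ∀ j ≠ i, u ⬝ᵥ p j = -1) :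
    w i * (u ⬝ᵥ p i + 1) = 1 :=
  calc w i * (u ⬝ᵥ p i + 1) = ∑ j, w j * (u ⬝ᵥ p j + 1) := by
        rw [sum_eq_single i (fun j _ hj => by rw [hu j hj, neg_add_cancel, mul_zero]) (by simp)]
    _ = u ⬝ᵥ ∑ j, w j • p j + ∑ j, w j := by
        simp only [dotProduct_sum, dotProduct_smul, smul_eq_mul, mul_add, mul_one,
          sum_add_distrib]
    _ = 1 := by rw [hwp, hw, dotProduct_zero, zero_add]

end DualVertices

section Reflexive

variable {d : ℕ} {p : Fin (d + 1) → Fin d → ℚ} {w : Fin (d + 1) → ℚ}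

theorem mem_dualBody_simplexHull_iff {u : Fin d → ℚ} :
    u ∈ dualBody (simplexHull p) ↔ ∀ i, -1 ≤ u ⬝ᵥ p i := by
  refine ⟨fun hu i => hu _ (subset_convexHull ℚ _ ⟨i, rfl⟩), fun hu => ?_⟩
  have hlin : IsLinearMap ℚ fun x : Fin d → ℚ => u ⬝ᵥ x :=
    ⟨dotProduct_add u, fun c => dotProduct_smul c u⟩
  exact convexHull_min (Set.range_subset_iff.2 hu) (convex_halfSpace_ge hlin (-1))

theorem mem_extremePoints_dualBody (hp : AffineIndependent ℚ p) (hw : ∑ i, w i = 1)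
    (hwp : ∑ i, w i • p i = 0) {i : Fin (d + 1)} (hi : 0 < w i) {u : Fin d → ℚ}
    (hu : ∀ j ≠ i, u ⬝ᵥ p j = -1) :
    u ∈ (dualBody (simplexHull p)).extremePoints ℚ := by
  have hself : w i * (u ⬝ᵥ p i + 1) = 1 := weight_mul_dotProduct_add_one_eq_one hw hwp hu
  have hmem : ∀ j, -1 ≤ u ⬝ᵥ p j := fun j => by
    rcases eq_or_ne j i with rfl | hj
    · linarith [pos_of_mul_pos_right (hself ▸ one_pos) hi.le]
    · exact (hu j hj).ge
  refine mem_extremePoints_iff_left.2 ⟨mem_dualBody_simplexHull_iff.2 hmem, ?_⟩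
  rintro x hx y hy ⟨s, t, hs, ht, hst, rfl⟩
  rw [mem_dualBody_simplexHull_iff] at hx hy
  refine (existsUnique_dotProduct_eq_neg_one hp hw hwp hi.ne').unique (fun j hj => ?_) hu
  have hcomb : s * (x ⬝ᵥ p j) + t * (y ⬝ᵥ p j) = -1 := by
    simpa only [add_dotProduct, smul_dotProduct, smul_eq_mul] using hu j hj
  exact (hx j).antisymm' (by nlinarith [hy j])

theorem exists_toQ_eq_of_mem_extremePoints {S : Set (Fin d → ℚ)} (hS : IsLatticeSet S)
    {u : Fin d → ℚ} (hu : u ∈ S.extremePoints ℚ) : ∃ z : Fin d → ℤ, u = toQ z := by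
  have hu' := hu
  rw [hS] at hu'
  obtain ⟨-, hint⟩ := extremePoints_convexHull_subset hu'
  choose z hz using hint
  exact ⟨z, funext hz⟩

theorem isLatticeSet_dualBody_of_gorensteinIndex_eq_one (hp : gorensteinIndex p = 1) :
    IsLatticeSet (dualBody (simplexHull p)) := by
  have hmem := Nat.sInf_mem (Nat.nonempty_of_sInf_eq_succ (k := 0) hp)
  rw [show sInf _ = 1 from hp] at hmem
  simpa using hmem.2

/-- The integral pairing data of a reflexive simplex `v`: `u i` is the vertex of the dual simplex
cut out by the facet of `v` opposite to `v i`, and `1 / a i` is the barycentric coordinate of the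
origin at `v i`. -/
structure IsDualSystem (v u : Fin (d + 1) → Fin d → ℤ) (a : Fin (d + 1) → ℤ) : Prop where
  pos : ∀ i, 0 < a i
  sum_inv : ∑ i, (a i : ℚ)⁻¹ = 1
  dotProduct_eq : ∀ i j, u i ⬝ᵥ v j = Matrix.diagonal a i j - 1

theorem toQ_dotProduct_toQ (x y : Fin d → ℤ) : toQ x ⬝ᵥ toQ y = ((x ⬝ᵥ y : ℤ) : ℚ) := by
  simp [dotProduct, toQ]

theorem IsFanoSimplex.exists_isDualSystem {v : Fin (d + 1) → Fin d → ℤ} (hv : IsFanoSimplex v)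
    (hG : gorensteinIndex (fun i => toQ (v i)) = 1) : ∃ u a, IsDualSystem v u a := by
  obtain ⟨hp, -, w, hpos, hw, horigin⟩ := hv
  have hwp : ∑ i, w i • toQ (v i) = 0 := by
    ext j
    simpa using horigin j
  have hdual : ∀ i, ∃ u : Fin d → ℤ, ∀ j ≠ i, toQ u ⬝ᵥ toQ (v j) = -1 := fun i => by
    obtain ⟨u, hu⟩ := (existsUnique_dotProduct_eq_neg_one hp hw hwp (hpos i).ne').exists
    obtain ⟨z, rfl⟩ := exists_toQ_eq_of_mem_extremePoints
      (isLatticeSet_dualBody_of_gorensteinIndex_eq_one hG)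
      (mem_extremePoints_dualBody hp hw hwp (hpos i) hu)
    exact ⟨z, hu⟩
  choose u hu using hdual
  have hinv : ∀ i, w i = ((u i ⬝ᵥ v i + 1 : ℤ) : ℚ)⁻¹ := fun i =>
    eq_inv_of_mul_eq_one_left (by
      simpa only [toQ_dotProduct_toQ, Int.cast_add, Int.cast_one] using
        weight_mul_dotProduct_add_one_eq_one hw hwp (hu i))
  refine ⟨u, fun i => u i ⬝ᵥ v i + 1, fun i => ?_, ?_, fun i j => ?_⟩
  · exact_mod_cast inv_pos.1 ((hpos i).trans_eq (hinv i))
  · simpa only [← hinv] using hw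
  · rcases eq_or_ne i j with rfl | hij
    · simp
    · rw [Matrix.diagonal_apply_ne _ hij, zero_sub]
      exact_mod_cast (toQ_dotProduct_toQ _ _).symm.trans (hu i j hij.symm)

end Reflexive

section Isomorphism

variable {d : ℕ} {v w x : Fin (d + 1) → Fin d → ℤ}

theorem isIsomorphicTo_comp_perm (v : Fin (d + 1) → Fin d → ℤ) (σ : Equiv.Perm (Fin (d + 1))) :
    IsIsomorphicTo v (v ∘ σ) :=
  ⟨1, σ.symm, by simp, fun i => by simp⟩

theorem IsIsomorphicTo.trans (hvw : IsIsomorphicTo v w) (hwx : IsIsomorphicTo w x) :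
    IsIsomorphicTo v x := by
  obtain ⟨U, σ, hU, hUσ⟩ := hvw
  obtain ⟨V, τ, hV, hVτ⟩ := hwx
  refine ⟨V * U, σ.trans τ, by simpa only [Matrix.det_mul] using hV.mul hU, fun i => ?_⟩
  rw [← Matrix.mulVec_mulVec, hUσ, hVτ, Equiv.trans_apply]

theorem IsIsomorphicTo.multOf_eq (h : IsIsomorphicTo v w) : multOf v = multOf w := by
  obtain ⟨U, σ, hU, hUσ⟩ := h
  have hbij : Function.Bijective U.mulVecLin.toAddMonoidHom :=
    mulVec_bijective_of_isUnit ((Matrix.isUnit_iff_isUnit_det U).2 hU)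
  have hrange : Set.range w = U.mulVecLin.toAddMonoidHom '' Set.range v := by
    rw [← Set.range_comp, ← σ.surjective.range_comp w]
    exact congrArg Set.range (funext fun i => (hUσ i).symm)
  rw [multOf, multOf, hrange, ← AddMonoidHom.map_closure, AddSubgroup.index_map_of_bijective hbij]

end Isomorphism

section Multiplicity

variable {d : ℕ} {v u : Fin (d + 1) → Fin d → ℤ} {a : Fin (d + 1) → ℤ}

theorem multOf_dvd_natAbs_det (hv : (Matrix.of (v ∘ Fin.castSucc)).det ≠ 0) :
    multOf v ∣ (Matrix.of (v ∘ Fin.castSucc)).det.natAbs := by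
  rw [← index_closure_range_eq_natAbs_det hv]
  exact AddSubgroup.index_dvd_of_le
    (AddSubgroup.closure_mono (Set.range_comp_subset_range Fin.castSucc v))

theorem multOf_eq_natAbs_det (hv : (Matrix.of (v ∘ Fin.castSucc)).det ≠ 0)
    (hlast : v (Fin.last d) ∈ AddSubgroup.closure (Set.range (v ∘ Fin.castSucc))) :
    multOf v = (Matrix.of (v ∘ Fin.castSucc)).det.natAbs := by
  have hle : AddSubgroup.closure (Set.range v) ≤
      AddSubgroup.closure (Set.range (v ∘ Fin.castSucc)) :=
    (AddSubgroup.closure_le _).2 <| Set.range_subset_iff.2 <|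
      Fin.lastCases hlast fun i => AddSubgroup.subset_closure ⟨i, rfl⟩
  rw [← index_closure_range_eq_natAbs_det hv]
  exact congrArg AddSubgroup.index
    (hle.antisymm (AddSubgroup.closure_mono (Set.range_comp_subset_range _ _)))

namespace IsDualSystem

theorem comp_perm (h : IsDualSystem v u a) (σ : Equiv.Perm (Fin (d + 1))) :
    IsDualSystem (v ∘ σ) (u ∘ σ) (a ∘ σ) where
  pos i := h.pos (σ i)
  sum_inv := (Equiv.sum_comp σ fun i => (a i : ℚ)⁻¹).trans h.sum_inv
  dotProduct_eq i j := by simp [h.dotProduct_eq, Matrix.diagonal_apply]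

theorem det_mul_det_mul_last (h : IsDualSystem v u a) :
    (Matrix.of (u ∘ Fin.castSucc)).det * (Matrix.of (v ∘ Fin.castSucc)).det * a (Fin.last d) =
      ∏ i : Fin d, a i.castSucc := by
  have hne : ∀ i, (a i : ℚ) ≠ 0 := fun i => Int.cast_ne_zero.2 (h.pos i).ne'
  have hgram : (Matrix.of (u ∘ Fin.castSucc) * (Matrix.of (v ∘ Fin.castSucc)).transpose).map
      (Int.castRingHom ℚ) =
      Matrix.diagonal (fun i : Fin d => (a i.castSucc : ℚ)) - Matrix.of fun _ _ => 1 := by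
    ext i j
    have hij := h.dotProduct_eq i.castSucc j.castSucc
    simp only [dotProduct, Matrix.diagonal_apply, Fin.castSucc_inj] at hij
    simp [Matrix.mul_apply, Matrix.diagonal_apply, hij]
  have hlast : 1 - ∑ i : Fin d, (a i.castSucc : ℚ)⁻¹ = (a (Fin.last d) : ℚ)⁻¹ := by
    rw [← h.sum_inv, Fin.sum_univ_castSucc, add_sub_cancel_left]
  have hdet := congrArg Matrix.det hgram
  rw [det_diagonal_sub_all_ones fun i => hne _, hlast, ← RingHom.mapMatrix_apply, ← RingHom.map_det,
    Matrix.det_mul, eq_intCast, Matrix.det_transpose, eq_mul_inv_iff_mul_eq₀ (hne _)] at hdet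
  exact_mod_cast hdet

theorem det_mul_det_ne_zero (h : IsDualSystem v u a) :
    (Matrix.of (u ∘ Fin.castSucc)).det * (Matrix.of (v ∘ Fin.castSucc)).det ≠ 0 :=
  left_ne_zero_of_mul <| h.det_mul_det_mul_last.trans_ne <|
    prod_ne_zero_iff.2 fun _ _ => (h.pos _).ne'

theorem natAbs_det_mul_multOf_mul_last_le (h : IsDualSystem v u a) :
    ((Matrix.of (u ∘ Fin.castSucc)).det.natAbs * multOf v : ℤ) * a (Fin.last d) ≤
      ∏ i : Fin d, a i.castSucc := by
  have hv := right_ne_zero_of_mul h.det_mul_det_ne_zero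
  have hle : (multOf v : ℤ) ≤ |(Matrix.of (v ∘ Fin.castSucc)).det| := by
    rw [Int.abs_eq_natAbs]
    exact_mod_cast Nat.le_of_dvd (Int.natAbs_pos.2 hv) (multOf_dvd_natAbs_det hv)
  rw [← abs_of_pos (prod_pos fun i _ => h.pos (Fin.castSucc i)), ← h.det_mul_det_mul_last, abs_mul,
    abs_mul, abs_of_pos (h.pos (Fin.last d)), Int.natCast_natAbs]
  gcongr
  exact (h.pos _).le

theorem multOf_mul_last_le (h : IsDualSystem v u a) :
    multOf v * a (Fin.last d) ≤ ∏ i : Fin d, a i.castSucc := by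
  have hu := Int.natAbs_pos.2 (left_ne_zero_of_mul h.det_mul_det_ne_zero)
  refine le_trans ?_ h.natAbs_det_mul_multOf_mul_last_le
  have := h.pos (Fin.last d)
  gcongr
  exact le_mul_of_one_le_left (by positivity) (by exact_mod_cast hu)

theorem isUnit_det_of_multOf_mul_last_eq (h : IsDualSystem v u a)
    (heq : multOf v * a (Fin.last d) = ∏ i : Fin d, a i.castSucc) :
    IsUnit (Matrix.of (u ∘ Fin.castSucc)).det := by
  have hu := Int.natAbs_pos.2 (left_ne_zero_of_mul h.det_mul_det_ne_zero)
  have hpos : 0 < multOf v * a (Fin.last d) := heq ▸ prod_pos fun i _ => h.pos _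
  have hle := h.natAbs_det_mul_multOf_mul_last_le
  rw [← heq, mul_assoc, mul_le_iff_le_one_left hpos] at hle
  exact Int.isUnit_iff_natAbs_eq.2 (le_antisymm (by exact_mod_cast hle) hu)

end IsDualSystem

/-- The simplex with vertices `a j • e j - 𝟙` for `j < d` and `-𝟙`, where `𝟙 = (1, …, 1)`; the
entry `a (Fin.last d)` is ignored. Pairing with the vectors `u 0, …, u (d - 1)` of a dual system
`IsDualSystem v u a` maps `v` onto it. -/
def unitFractionSimplex (a : Fin (d + 1) → ℤ) : Fin (d + 1) → Fin d → ℤ :=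
  fun j i => Matrix.diagonal a i.castSucc j - 1

theorem IsDualSystem.isIsomorphicTo_unitFractionSimplex (h : IsDualSystem v u a)
    (heq : multOf v * a (Fin.last d) = ∏ i : Fin d, a i.castSucc) :
    IsIsomorphicTo v (unitFractionSimplex a) :=
  ⟨Matrix.of (u ∘ Fin.castSucc), 1, h.isUnit_det_of_multOf_mul_last_eq heq,
    fun j => funext fun i => h.dotProduct_eq i.castSucc j⟩

end Multiplicity

section UnitFractions

theorem mul_sum_Ici_inv_le_card {ι K : Type*} [Preorder ι] [LocallyFiniteOrderTop ι] [Field K]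
    [LinearOrder K] [IsStrictOrderedRing K] {a : ι → K} (hpos : ∀ i, 0 < a i)
    (hmono : Monotone a) (i : ι) : a i * ∑ j ∈ Ici i, (a j)⁻¹ ≤ #(Ici i) := by
  rw [mul_sum, ← nsmul_one]
  refine sum_le_card_nsmul _ _ 1 fun j hj => ?_
  exact mul_inv_le_one_of_le₀ (hmono (mem_Ici.1 hj)) (hpos j).le

variable {a : Fin 5 → ℤ}

theorem greedy_bounds_of_sum_inv_eq_one (hpos : ∀ i, 0 < a i) (hmono : Monotone a)
    (hsum : ∑ i, (a i : ℚ)⁻¹ = 1) :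
    a 0 + a 1 < a 0 * a 1 ∧ a 1 * (a 0 - 1) ≤ 4 * a 0 ∧
      a 2 * (a 0 * a 1 - a 0 - a 1) ≤ 3 * (a 0 * a 1) := by
  have hposQ : ∀ i, (0 : ℚ) < a i := fun i => Int.cast_pos.2 (hpos i)
  have hinv : ∀ i, (0 : ℚ) < (a i : ℚ)⁻¹ := fun i => inv_pos.2 (hposQ i)
  have htail := mul_sum_Ici_inv_le_card hposQ (Int.cast_mono.comp hmono)
  have htail₁ : (a 1 : ℚ) * (1 - (a 0 : ℚ)⁻¹) ≤ 4 := by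
    have hIci : ∑ j ∈ Ici (1 : Fin 5), (a j : ℚ)⁻¹ = 1 - (a 0 : ℚ)⁻¹ := by
      rw [← hsum, Fin.sum_univ_five, show Ici (1 : Fin 5) = {1, 2, 3, 4} by decide]
      simp [add_assoc]
    simpa [hIci] using htail 1
  have htail₂ : (a 2 : ℚ) * (1 - (a 0 : ℚ)⁻¹ - (a 1 : ℚ)⁻¹) ≤ 3 := by
    have hIci : ∑ j ∈ Ici (2 : Fin 5), (a j : ℚ)⁻¹ = 1 - (a 0 : ℚ)⁻¹ - (a 1 : ℚ)⁻¹ := by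
      rw [← hsum, Fin.sum_univ_five, show Ici (2 : Fin 5) = {2, 3, 4} by decide]
      simp [add_assoc]
    simpa [hIci] using htail 2
  have hlt : (a 0 : ℚ)⁻¹ + (a 1 : ℚ)⁻¹ < 1 := by
    rw [← hsum, Fin.sum_univ_five]
    linarith [hinv 2, hinv 3, hinv 4]
  have h₀ := hposQ 0
  have h₁ := hposQ 1
  rw [← @Int.cast_lt ℚ, ← @Int.cast_le ℚ, ← @Int.cast_le ℚ]
  push_cast
  field_simp at htail₁ htail₂ hlt
  exact ⟨by linarith, by linarith, by linarith⟩

theorem mul_mul_le_128_of_greedy_bounds {x y z : ℤ} (hx : 0 < x) (hxy : x ≤ y)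
    (hlt : x + y < x * y) (hy : y * (x - 1) ≤ 4 * x) (hz : z * (x * y - x - y) ≤ 3 * (x * y)) :
    x * y * z ≤ 128 ∧ (x * y * z = 128 → x = 2 ∧ y = 8 ∧ z = 8) := by
  have hx₂ : 2 ≤ x := by
    by_contra! h
    obtain rfl : x = 1 := by omega
    omega
  have hx₅ : x ≤ 5 := by nlinarith
  have hy₈ : y ≤ 8 := by nlinarith
  interval_cases x <;> interval_cases y <;> omega

theorem le_128_of_mul_last_le_prod (hpos : ∀ i, 0 < a i) (hmono : Monotone a)
    (hsum : ∑ i, (a i : ℚ)⁻¹ = 1) {N : ℤ} (hN : N * a 4 ≤ a 0 * a 1 * a 2 * a 3) :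
    N ≤ 128 ∧ (N = 128 → a = ![2, 8, 8, 8, 8]) := by
  obtain ⟨hlt, hbound₁, hbound₂⟩ := greedy_bounds_of_sum_inv_eq_one hpos hmono hsum
  obtain ⟨hle, heq⟩ := mul_mul_le_128_of_greedy_bounds (hpos 0) (hmono (by decide)) hlt
    hbound₁ hbound₂
  have h₃₄ : a 3 ≤ a 4 := hmono (by decide)
  have hprod : 0 < a 0 * a 1 * a 2 := mul_pos (mul_pos (hpos 0) (hpos 1)) (hpos 2)
  have hNle : N ≤ a 0 * a 1 * a 2 :=
    le_of_mul_le_mul_right (hN.trans (mul_le_mul_of_nonneg_left h₃₄ hprod.le)) (hpos 4)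
  refine ⟨hNle.trans hle, ?_⟩
  rintro rfl
  obtain ⟨h₀, h₁, h₂⟩ := heq (hle.antisymm hNle)
  have h₃ : a 3 = a 4 := by
    rw [h₀, h₁, h₂] at hN
    omega
  have h₄ : a 4 = 8 := by
    have hne : (a 4 : ℚ) ≠ 0 := Int.cast_ne_zero.2 (hpos 4).ne'
    rw [Fin.sum_univ_five, h₀, h₁, h₂, h₃] at hsum
    push_cast at hsum
    field_simp at hsum
    have : (a 4 : ℚ) = 8 := by linarith
    exact_mod_cast this
  ext i
  fin_cases i <;> simp [*]

end UnitFractions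

/-- The simplex `Δ(P)` of multiplicity `128`; its weights are `1/2, 1/8, 1/8, 1/8, 1/8`. -/
def maximalSimplex : Fin 5 → Fin 4 → ℤ :=
  ![![1, 0, 0, 0], ![1, 2, 0, 0], ![1, 2, 8, 0], ![1, 2, 0, 8], ![-7, -6, -8, -8]]

theorem multOf_maximalSimplex : multOf maximalSimplex = 128 := by
  have hdet : (Matrix.of (maximalSimplex ∘ Fin.castSucc)).det = 128 := by
    simp [Matrix.det_succ_row_zero, Fin.sum_univ_succ, Fin.succAbove, maximalSimplex]
  have hlast : maximalSimplex (Fin.last 4) =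
      ∑ i, ![-4, -1, -1, -1] i • (maximalSimplex ∘ Fin.castSucc) i := by decide
  rw [multOf_eq_natAbs_det (by rw [hdet]; decide), hdet]
  · rfl
  · rw [hlast]
    exact sum_mem fun i _ => zsmul_mem (AddSubgroup.subset_closure (Set.mem_range_self i)) _

theorem unitFractionSimplex_isIsomorphicTo_maximalSimplex :
    IsIsomorphicTo (unitFractionSimplex ![2, 8, 8, 8, 8]) maximalSimplex := by
  refine ⟨!![4, 1, 1, 1; 3, 1, 1, 1; 4, 1, 2, 1; 4, 1, 1, 2], 1, ?_, by decide⟩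
  simp [Matrix.det_succ_row_zero, Fin.sum_univ_succ, Fin.succAbove]

theorem IsDualSystem.multOf_le_128_and_isIsomorphicTo_of_monotone {v u : Fin 5 → Fin 4 → ℤ}
    {a : Fin 5 → ℤ} (h : IsDualSystem v u a) (ha : Monotone a) :
    multOf v ≤ 128 ∧ (multOf v = 128 → IsIsomorphicTo v maximalSimplex) := by
  obtain ⟨hle, heq⟩ := le_128_of_mul_last_le_prod h.pos ha h.sum_inv
    (by simpa [Fin.prod_univ_four] using! h.multOf_mul_last_le)
  refine ⟨by exact_mod_cast hle, fun hmult => ?_⟩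
  obtain rfl := heq (by exact_mod_cast hmult)
  exact (h.isIsomorphicTo_unitFractionSimplex (by rw [hmult]; rfl)).trans
    unitFractionSimplex_isIsomorphicTo_maximalSimplex

/-- A Fano simplex of dimension 4 and Gorenstein index 1 has
multiplicity at most 128, with equality iff it is isomorphic to the simplex with
vertex matrix having columns (1,0,0,0), (1,2,0,0), (1,2,8,0), (1,2,0,8), (-7,-6,-8,-8). -/
theorem mult_bound_dim4_gorenstein1
    (v : Fin 5 → Fin 4 → ℤ)
    (hFano : IsFanoSimplex v)
    (hGor : gorensteinIndex (fun i => toQ (v i)) = 1) :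
    multOf v ≤ 128 ∧
      (multOf v = 128 ↔
        IsIsomorphicTo v
          ![![1, 0, 0, 0],
            ![1, 2, 0, 0],
            ![1, 2, 8, 0],
            ![1, 2, 0, 8],
            ![-7, -6, -8, -8]]) := by
  obtain ⟨u, a, h⟩ := hFano.exists_isDualSystem hGor
  have hsort : IsIsomorphicTo v (v ∘ Tuple.sort a) := isIsomorphicTo_comp_perm v _
  obtain ⟨hle, heq⟩ :=
    (h.comp_perm _).multOf_le_128_and_isIsomorphicTo_of_monotone (Tuple.monotone_sort a)
  rw [← hsort.multOf_eq] at hle heq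
  exact ⟨hle, fun hmult => hsort.trans (heq hmult),
    fun hiso => hiso.multOf_eq.trans multOf_maximalSimplex⟩
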